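/- (Radó's theorem in higher dimensions.) Let U ⊆ ℝ^d be a nonempty open set, let a_0, a_1, ..., a_n : U → ℝ be continuous functions such that the map a = (a_0, ..., a_n) does not vanish identically on U, and let f : ℝ^d → ℝ be a continuous function satisfying a_0(h)f(x) + a_1(h)f(x + h) + ... + a_n(h)f(x + nh) = 0 for all x ∈ ℝ^d and all h ∈ U. Then f is an exponential polynomial. -/

import Mathlib

/-- A continuous real-valued function on `ℝ^d` is an exponential polynomial if it is a
finite sum of terms `P_k(x) * exp(⟨λ_k, x⟩)` with `P_k` complex polynomials and
`λ_k ∈ ℂ^d` (the sum being real-valued). -/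
def IsExpPolyReal {d : ℕ} (f : (Fin d → ℝ) → ℝ) : Prop :=
  ∃ (m : ℕ) (P : Fin m → MvPolynomial (Fin d) ℂ) (lam : Fin m → Fin d → ℂ),
    ∀ x : Fin d → ℝ,
      (f x : ℂ) = ∑ k, MvPolynomial.eval (fun i => (x i : ℂ)) (P k) *
        Complex.exp (∑ i, lam k i * x i)

/-!
The equation says that, for every `h` near some `h₀`, a nonzero polynomial in the translation by `h`
annihilates `f`. Finitely many such `h` generate a dense subgroup. The corresponding translations
commute and are algebraic at `f`, so the algebra they generate acts on `f` through a
finite-dimensional quotient. Hence `f` lies in a finite-dimensional space of continuous functions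
which is invariant under these translations and, by density, under all translations.

A finite-dimensional continuous representation of a real vector space is a product of one-parameter
groups. Each of these is `t ↦ exp (t • a)`, because differentiability follows from
`ψ t * ∫ s in 0..ε, ψ s = ∫ s in t..(t + ε), ψ s` with `∫ s in 0..ε, ψ s` invertible for suitable
`ε`. Splitting the algebra into generalized eigenspaces of multiplication by `a` shows that matrix
coefficients are exponential polynomials, and `f` is the matrix coefficient of its own orbit given
by evaluation at `0`.
-/

open Filter MeasureTheory Topology
open NormedSpace (exp)
open Polynomial (aeval aeval_algHom_apply)
open scoped Nat Polynomial

section InvariantSubspace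

variable {K X : Type*} [Field K] [AddCommGroup X] [Module K X]

open scoped IsMulCommutative in
theorem finite_span_singleton_of_forall_aeval_lsmul_eq_zero {R : Type*} [Ring R]
    [IsMulCommutative R] [Algebra K R] [Module R X] [IsScalarTower K R X] {s : Set R}
    (hs : s.Finite) (hgen : Algebra.adjoin K s = ⊤) {v : X}
    (hv : ∀ r ∈ s, ∃ p : K[X], p ≠ 0 ∧ aeval (Algebra.lsmul K K X r) p v = 0) :
    Module.Finite K (R ∙ v) := by
  let π := Ideal.Quotient.mkₐ K (Ideal.torsionOf R X v)
  have hint : ∀ q ∈ π '' s, IsIntegral K q := by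
    rintro _ ⟨r, hr, rfl⟩
    obtain ⟨p, hp, hpv⟩ := hv r hr
    refine IsAlgebraic.isIntegral ⟨p, hp, ?_⟩
    rw [aeval_algHom_apply] at hpv ⊢
    exact Ideal.Quotient.eq_zero_iff_mem.2 hpv
  have htop : Algebra.adjoin K (π '' s) = ⊤ := by
    rw [← AlgHom.map_adjoin, hgen, Algebra.map_top, AlgHom.range_eq_top]
    exact Ideal.Quotient.mkₐ_surjective K _
  have : Module.Finite K (R ⧸ Ideal.torsionOf R X v) :=
    ⟨by simpa [htop] using fg_adjoin_of_finite (hs.image π) hint⟩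
  exact .equiv ((Ideal.quotTorsionOfEquivSpanSingleton R X v).restrictScalars K)

theorem exists_finiteDimensional_invariant {s : Set (Module.End K X)} (hs : s.Finite)
    (hcomm : ∀ S ∈ s, ∀ T ∈ s, S * T = T * S) {v : X}
    (hv : ∀ T ∈ s, ∃ p : K[X], p ≠ 0 ∧ aeval T p v = 0) :
    ∃ V : Submodule K X, FiniteDimensional K V ∧ v ∈ V ∧ ∀ T ∈ s, V ∈ T.invtSubmodule := by
  have := Algebra.isMulCommutative_adjoin K hcomm
  let R := Algebra.adjoin K s
  have htop : Algebra.adjoin K (((↑) : R → Module.End K X) ⁻¹' s) = ⊤ :=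
    Algebra.adjoin_adjoin_coe_preimage
  have hpre : (((↑) : R → Module.End K X) ⁻¹' s).Finite := hs.preimage Subtype.val_injective.injOn
  have hfin : Module.Finite K (R ∙ v) :=
    finite_span_singleton_of_forall_aeval_lsmul_eq_zero hpre htop fun T hT ↦ hv T hT
  refine ⟨(R ∙ v).restrictScalars K, hfin, Submodule.mem_span_singleton_self v, ?_⟩
  intro T hT w hw
  exact (R ∙ v).smul_mem (⟨T, Algebra.subset_adjoin hT⟩ : R) hw

theorem mem_invtSubmodule_neg {E : Type*} [AddGroup E] (ρ : AddChar E (Module.End K X))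
    {V : Submodule K X} [FiniteDimensional K V] {h : E} (hV : V ∈ (ρ h).invtSubmodule) :
    V ∈ (ρ (-h)).invtSubmodule := by
  have hinv : ρ (-h) * ρ h = 1 := by
    rw [← AddChar.map_add_eq_mul, neg_add_cancel, AddChar.map_zero_eq_one]
  have hleft : Function.LeftInverse (ρ (-h)) (ρ h) := LinearMap.congr_fun hinv
  have hmap : V.map (ρ h) = V :=
    Submodule.eq_of_le_of_finrank_eq (Submodule.map_le_iff_le_comap.2 hV)
      (Submodule.equivMapOfInjective _ hleft.injective V).finrank_eq.symm
  intro v hv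
  rw [← hmap] at hv
  obtain ⟨w, hw, rfl⟩ := hv
  rwa [Submodule.mem_comap, hleft w]

end InvariantSubspace

theorem mem_invtSubmodule_of_dense {𝕜 E X : Type*} [NontriviallyNormedField 𝕜] [CompleteSpace 𝕜]
    [AddGroup E] [TopologicalSpace E] [AddCommGroup X] [Module 𝕜 X] [TopologicalSpace X]
    [IsTopologicalAddGroup X] [ContinuousSMul 𝕜 X] [T2Space X]
    {ρ : AddChar E (Module.End 𝕜 X)} (hρ : ∀ v, Continuous fun y ↦ ρ y v) {s : Set E}
    (hs : Dense (AddSubgroup.closure s : Set E)) {V : Submodule 𝕜 X} [FiniteDimensional 𝕜 V]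
    (hV : ∀ h ∈ s, V ∈ (ρ h).invtSubmodule) (y : E) : V ∈ (ρ y).invtSubmodule := by
  have hclosure : ∀ z ∈ AddSubgroup.closure s, V ∈ (ρ z).invtSubmodule := by
    intro z hz
    induction hz using AddSubgroup.closure_induction with
    | mem z hz => exact hV z hz
    | zero => simp
    | add a b _ _ ha hb =>
      rw [AddChar.map_add_eq_mul]
      exact fun v hv ↦ ha (hb hv)
    | neg a _ ha => exact mem_invtSubmodule_neg ρ ha
  intro v hv
  exact closure_minimal (fun z hz ↦ hclosure z hz hv)
    (V.closed_of_finiteDimensional.preimage (hρ v)) (hs y)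

section DenseSubgroup

variable {E : Type*} [AddCommGroup E] [Module ℝ E] [TopologicalSpace E] [ContinuousSMul ℝ E]

theorem smul_mem_of_isClosed {H : AddSubgroup E} (hH : IsClosed (H : Set E)) {v : E}
    (hv : v ∈ H) (hv' : √2 • v ∈ H) (t : ℝ) : t • v ∈ H := by
  have hdense : Dense (AddSubgroup.closure {√2, 1} : Set ℝ) := by
    rw [dense_addSubgroupClosure_pair_iff, div_one]
    exact irrational_sqrt_two
  have hle : AddSubgroup.closure {√2, 1} ≤
      H.comap (LinearMap.toSpanSingleton ℝ E v).toAddMonoidHom := by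
    rw [AddSubgroup.closure_le]
    rintro _ (rfl | rfl)
    · exact hv'
    · simpa using hv
  exact closure_minimal hle (hH.preimage (continuous_id.smul continuous_const)) (hdense t)

theorem exists_finite_subset_dense_closure [IsTopologicalAddGroup E] [FiniteDimensional ℝ E]
    {U : Set E} {h₀ : E} (hU : U ∈ 𝓝 h₀) :
    ∃ s ⊆ U, s.Finite ∧ Dense (AddSubgroup.closure s : Set E) := by
  let b := Module.finBasis ℝ E
  have hline (v : E) : ∀ᶠ ε : ℝ in 𝓝[≠] 0, h₀ + ε • v ∈ U := by
    have : Tendsto (fun ε : ℝ ↦ h₀ + ε • v) (𝓝 0) (𝓝 (h₀ + (0 : ℝ) • v)) :=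
      (by fun_prop : Continuous fun ε : ℝ ↦ h₀ + ε • v).tendsto 0
    rw [zero_smul, add_zero] at this
    exact this.mono_left nhdsWithin_le_nhds hU
  obtain ⟨ε, hε, hε₀⟩ := ((eventually_all.2 fun i ↦ (hline (b i)).and (hline (√2 • b i))).and
    self_mem_nhdsWithin).exists
  let s : Set E :=
    insert h₀ (Set.range (fun i ↦ h₀ + ε • b i) ∪ Set.range fun i ↦ h₀ + ε • √2 • b i)
  refine ⟨s, ?_, ((Set.finite_range _).union (Set.finite_range _)).insert _, fun x ↦ ?_⟩
  · rintro _ (rfl | ⟨i, rfl⟩ | ⟨i, rfl⟩)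
    exacts [mem_of_mem_nhds hU, (hε i).1, (hε i).2]
  let H := (AddSubgroup.closure s).topologicalClosure
  have hdiff {v : E} (hv : h₀ + v ∈ s) : v ∈ H := by
    refine AddSubgroup.le_topologicalClosure _ ?_
    simpa using sub_mem (AddSubgroup.subset_closure hv) (AddSubgroup.subset_closure (.inl rfl))
  have hbasis (i) (t : ℝ) : t • b i ∈ H := by
    have := smul_mem_of_isClosed (AddSubgroup.isClosed_topologicalClosure _)
      (hdiff (.inr (.inl ⟨i, rfl⟩)))
      (smul_comm √2 ε (b i) ▸ hdiff (.inr (.inr ⟨i, rfl⟩))) (t / ε)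
    rwa [smul_smul, div_mul_cancel₀ t hε₀] at this
  change x ∈ H
  rw [← b.sum_repr x]
  exact sum_mem fun i _ ↦ hbasis i _

end DenseSubgroup

section OneParameterGroup

variable {A : Type*} [NormedRing A] [NormedAlgebra ℝ A] [CompleteSpace A]

theorem exists_isUnit_intervalIntegral {M : ℝ → A} (hM : Continuous M) (h0 : IsUnit (M 0)) :
    ∃ ε : ℝ, IsUnit (∫ s in 0..ε, M s) := by
  have hlim : Tendsto (slope (fun t ↦ ∫ s in 0..t, M s) 0) (𝓝[≠] 0) (𝓝 (M 0)) :=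
    (hM.integral_hasStrictDerivAt 0 0).hasDerivAt.tendsto_slope
  obtain ⟨ε, hunit, hε⟩ :=
    ((hlim.eventually (Units.isOpen.mem_nhds h0)).and self_mem_nhdsWithin).exists
  refine ⟨ε, ?_⟩
  change IsUnit (slope (fun t ↦ ∫ s in 0..t, M s) 0 ε) at hunit
  rw [slope_def_module, intervalIntegral.integral_same, sub_zero, sub_zero] at hunit
  exact (isUnit_smul_iff (Units.mk0 ε hε)⁻¹ _).1 hunit

theorem addChar_mul_intervalIntegral {ψ : AddChar ℝ A} (hψ : Continuous ψ) (t ε : ℝ) :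
    ψ t * ∫ s in 0..ε, ψ s = (∫ s in 0..(t + ε), ψ s) - ∫ s in 0..t, ψ s := by
  have hint (a b : ℝ) : IntervalIntegrable ψ volume a b := hψ.intervalIntegrable a b
  rw [intervalIntegral.integral_interval_sub_left (hint _ _) (hint _ _)]
  have h := (ContinuousLinearMap.mul ℝ A (ψ t)).intervalIntegral_comp_comm (hint 0 ε)
  simp only [ContinuousLinearMap.mul_apply', ← AddChar.map_add_eq_mul] at h
  rw [← h, intervalIntegral.integral_comp_add_left, add_zero]

theorem exists_hasDerivAt_of_continuous_addChar {ψ : AddChar ℝ A} (hψ : Continuous ψ) :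
    ∃ a : A, ∀ t, HasDerivAt ψ (ψ t * a) t := by
  obtain ⟨ε, B, hB⟩ := exists_isUnit_intervalIntegral hψ (ψ.map_zero_eq_one ▸ isUnit_one)
  have hprim (t : ℝ) : HasDerivAt (fun t ↦ ∫ s in 0..t, ψ s) (ψ t) t :=
    (hψ.integral_hasStrictDerivAt 0 t).hasDerivAt
  have hψB : ψ = fun t ↦ ((∫ s in 0..(t + ε), ψ s) - ∫ s in 0..t, ψ s) * ↑B⁻¹ := by
    ext t
    rw [Units.eq_mul_inv_iff_mul_eq, hB, addChar_mul_intervalIntegral hψ]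
  refine ⟨(ψ ε - 1) * ↑B⁻¹, fun t ↦ ?_⟩
  have hderiv := (((hprim (t + ε)).comp_add_const t ε).sub (hprim t)).mul_const (↑B⁻¹ : A)
  rw [← mul_assoc, mul_sub_one, ← AddChar.map_add_eq_mul]
  exact hderiv.congr_of_eventuallyEq (.of_eq hψB)

theorem exists_eq_exp_smul_of_continuous_addChar {ψ : AddChar ℝ A} (hψ : Continuous ψ) :
    ∃ a : A, ∀ t : ℝ, ψ t = exp (t • a) := by
  let := NormedAlgebra.restrictScalars ℚ ℝ A
  obtain ⟨a, ha⟩ := exists_hasDerivAt_of_continuous_addChar hψ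
  refine ⟨a, fun t ↦ ?_⟩
  have hderiv (t : ℝ) : HasDerivAt (fun t : ℝ ↦ ψ t * exp (t • -a)) 0 t := by
    refine ((ha t).mul (hasDerivAt_exp_smul_const' (-a) t)).congr_deriv ?_
    noncomm_ring
  have hconst := is_const_of_deriv_eq_zero (fun t ↦ (hderiv t).differentiableAt)
    (fun t ↦ (hderiv t).deriv) t 0
  have hinv : exp (t • -a) * exp (t • a) = 1 := by
    rw [smul_neg, ← NormedSpace.exp_add_of_commute (Commute.refl (t • a)).neg_left,
      neg_add_cancel, NormedSpace.exp_zero]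
  simp only [zero_smul, NormedSpace.exp_zero, AddChar.map_zero_eq_one, mul_one] at hconst
  rw [← mul_one (ψ t), ← hinv, ← mul_assoc, hconst, one_mul]

end OneParameterGroup

/-- The algebra of those maps into a finite-dimensional algebra whose coordinates with respect to
some, equivalently every, basis lie in a given algebra of functions. It is defined through linear
functionals in order to avoid choosing a basis. -/
def coefficientSubalgebra {𝕜 X : Type*} [Field 𝕜] (S : Subalgebra 𝕜 (X → 𝕜)) (A : Type*) [Ring A]
    [Algebra 𝕜 A] [FiniteDimensional 𝕜 A] : Subalgebra 𝕜 (X → A) where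
  carrier := {F | ∀ l : Module.Dual 𝕜 A, (fun x ↦ l (F x)) ∈ S}
  mul_mem' {F G} hF hG l := by
    let b := Module.finBasis 𝕜 A
    have hexpand : (fun x ↦ l (F x * G x)) =
        ∑ i, (fun x ↦ b.coord i (F x)) * fun x ↦ (l ∘ₗ LinearMap.mulLeft 𝕜 (b i)) (G x) := by
      ext x
      conv_lhs => rw [← b.sum_repr (F x), Finset.sum_mul, map_sum]
      simp [Finset.sum_apply]
    change (fun x ↦ l (F x * G x)) ∈ S
    rw [hexpand]
    exact sum_mem fun i _ ↦ mul_mem (hF _) (hG _)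
  add_mem' hF hG l := by simpa using! add_mem (hF l) (hG l)
  algebraMap_mem' c l :=
    S.algebraMap_mem (l (algebraMap 𝕜 A c))

theorem exp_smul_mul_eq_sum {A : Type*} [NormedRing A] [NormedAlgebra ℂ A] [CompleteSpace A]
    {a w : A} {μ : ℂ} {N : ℕ} (hw : (a - algebraMap ℂ A μ) ^ N * w = 0) (z : ℂ) :
    exp (z • a) * w =
      ∑ k ∈ Finset.range N, ((k ! : ℂ)⁻¹ * z ^ k * Complex.exp (μ * z)) •
        ((a - algebraMap ℂ A μ) ^ k * w) := by
  let := NormedAlgebra.restrictScalars ℚ ℂ A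
  set b := a - algebraMap ℂ A μ with hb
  have hsplit : exp (z • a) = Complex.exp (μ * z) • exp (z • b) := by
    have hza : z • a = algebraMap ℂ A (μ * z) + z • b := by
      rw [hb, smul_sub, mul_comm μ, map_mul, ← Algebra.smul_def]
      abel
    rw [hza, NormedSpace.exp_add_of_commute (Algebra.commutes _ _),
      ← NormedSpace.algebraMap_exp_comm, ← Algebra.smul_def, Complex.exp_eq_exp_ℂ]
  have hfin : HasSum (fun k ↦ ((k ! : ℂ)⁻¹ • (z • b) ^ k) * w)
      (∑ k ∈ Finset.range N, ((k ! : ℂ)⁻¹ • (z • b) ^ k) * w) := by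
    refine hasSum_sum_of_ne_finset_zero fun k hk ↦ ?_
    obtain ⟨j, rfl⟩ := Nat.exists_eq_add_of_le' (not_lt.1 (Finset.mem_range.not.1 hk))
    rw [smul_pow, pow_add b, smul_mul_assoc, smul_mul_assoc, mul_assoc, hw, mul_zero,
      smul_zero, smul_zero]
  have hser := (NormedSpace.exp_series_hasSum_exp' (𝕂 := ℂ) (z • b)).mul_right w
  rw [hsplit, smul_mul_assoc, hser.unique hfin, Finset.smul_sum]
  refine Finset.sum_congr rfl fun k _ ↦ ?_
  rw [smul_pow, smul_mul_assoc, smul_mul_assoc, smul_smul, smul_smul]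
  congr 1
  ring

theorem exp_smul_mem_coefficientSubalgebra {X A : Type*} [NormedRing A] [NormedAlgebra ℂ A]
    [FiniteDimensional ℂ A] {S : Subalgebra ℂ (X → ℂ)} {u : X → ℂ} (hu : u ∈ S)
    (hexp : ∀ μ : ℂ, (fun x ↦ Complex.exp (μ * u x)) ∈ S) (a : A) :
    (fun x ↦ exp (u x • a)) ∈ coefficientSubalgebra S A := by
  have : CompleteSpace A := FiniteDimensional.complete ℂ A
  intro l
  suffices h : ∀ w : A, (fun x ↦ l (exp (u x • a) * w)) ∈ S by simpa using h 1
  intro w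
  have hw : w ∈ ⨆ μ : ℂ, Module.End.maxGenEigenspace (LinearMap.mulLeft ℂ a) μ := by
    rw [Module.End.iSup_maxGenEigenspace_eq_top]
    trivial
  induction hw using Submodule.iSup_induction' with
  | zero =>
    simp only [mul_zero, map_zero]
    exact S.zero_mem
  | add v w _ _ hv hw => simpa [mul_add] using! S.add_mem hv hw
  | mem μ w hw =>
    obtain ⟨N, hN⟩ := (Module.End.mem_maxGenEigenspace _ _ _).1 hw
    have hmul : LinearMap.mulLeft ℂ a - μ • 1 = LinearMap.mulLeft ℂ (a - algebraMap ℂ A μ) := by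
      ext v
      simp [sub_mul, Algebra.smul_def]
    rw [hmul, LinearMap.pow_mulLeft, LinearMap.mulLeft_apply] at hN
    have hsum : (fun x ↦ l (exp (u x • a) * w)) = ∑ k ∈ Finset.range N,
        ((k ! : ℂ)⁻¹ * l ((a - algebraMap ℂ A μ) ^ k * w)) •
          (u ^ k * fun x ↦ Complex.exp (μ * u x)) := by
      ext x
      simp only [exp_smul_mul_eq_sum hN, map_sum, map_smul, Finset.sum_apply, Pi.smul_apply,
        Pi.mul_apply, Pi.pow_apply, smul_eq_mul]
      exact Finset.sum_congr rfl fun k _ ↦ by ring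
    rw [hsum]
    exact sum_mem fun k _ ↦ S.smul_mem (mul_mem (pow_mem hu k) (hexp μ)) _

/-- The exponential polynomials on a real vector space, as the algebra of functions generated by
the linear functionals and their exponentials. Functionals are only `ℝ`-linear, which amounts to
allowing complex coefficients and frequencies. -/
def expPolyAlgebra (E : Type*) [AddCommGroup E] [Module ℝ E] : Subalgebra ℂ (E → ℂ) :=
  Algebra.adjoin ℂ (Set.range (fun (L : E →ₗ[ℝ] ℂ) x ↦ L x) ∪
    Set.range fun (L : E →ₗ[ℝ] ℂ) x ↦ Complex.exp (L x))

section Representation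

variable {E : Type*} [AddCommGroup E] [Module ℝ E]

theorem linearMap_mem_expPolyAlgebra (L : E →ₗ[ℝ] ℂ) :
    (L : E → ℂ) ∈ expPolyAlgebra E :=
  Algebra.subset_adjoin (.inl ⟨L, rfl⟩)

theorem exp_linearMap_mem_expPolyAlgebra (L : E →ₗ[ℝ] ℂ) :
    (fun x ↦ Complex.exp (L x)) ∈ expPolyAlgebra E :=
  Algebra.subset_adjoin (.inr ⟨L, rfl⟩)

variable [TopologicalSpace E] [ContinuousSMul ℝ E] [FiniteDimensional ℝ E]

theorem addChar_mem_coefficientSubalgebra {A : Type*} [NormedRing A] [NormedAlgebra ℂ A]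
    [FiniteDimensional ℂ A] {ψ : AddChar E A} (hψ : Continuous ψ) :
    (ψ : E → A) ∈ coefficientSubalgebra (expPolyAlgebra E) A := by
  let := NormedAlgebra.restrictScalars ℝ ℂ A
  have : CompleteSpace A := FiniteDimensional.complete ℂ A
  let b := Module.finBasis ℝ E
  have hline (i) : (fun x ↦ ψ (b.repr x i • b i)) ∈ coefficientSubalgebra (expPolyAlgebra E) A := by
    have hcont : Continuous
        (ψ.compAddMonoidHom (LinearMap.toSpanSingleton ℝ E (b i)).toAddMonoidHom) :=
      hψ.comp (continuous_id.smul continuous_const)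
    obtain ⟨a, ha⟩ := exists_eq_exp_smul_of_continuous_addChar hcont
    let u : E →ₗ[ℝ] ℂ := Complex.ofRealCLM.toLinearMap ∘ₗ b.coord i
    have hu : (fun x ↦ ψ (b.repr x i • b i)) = fun x ↦ exp (u x • a) :=
      funext fun x ↦ (ha (b.repr x i)).trans (by rw [← Complex.coe_smul]; rfl)
    rw [hu]
    exact exp_smul_mem_coefficientSubalgebra (linearMap_mem_expPolyAlgebra u)
      (fun μ ↦ exp_linearMap_mem_expPolyAlgebra (μ • u)) a
  have hprod (s : Finset (Fin (Module.finrank ℝ E))) :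
      (fun x ↦ ψ (∑ i ∈ s, b.repr x i • b i)) ∈ coefficientSubalgebra (expPolyAlgebra E) A := by
    induction s using Finset.cons_induction with
    | empty =>
      simp only [Finset.sum_empty, AddChar.map_zero_eq_one]
      exact one_mem _
    | cons i s hi ih =>
      simp only [Finset.sum_cons, AddChar.map_add_eq_mul]
      exact mul_mem (hline i) ih
  simpa only [b.sum_repr] using hprod Finset.univ

variable {X : Type*} [AddCommGroup X] [Module ℂ X] [TopologicalSpace X] [IsTopologicalAddGroup X]
  [ContinuousSMul ℂ X] [T2Space X] {ρ : AddChar E (Module.End ℂ X)}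

theorem coefficient_mem_expPolyAlgebra_of_finiteDimensional [FiniteDimensional ℂ X]
    (hρ : ∀ v, Continuous fun x ↦ ρ x v) (l : Module.Dual ℂ X) (v : X) :
    (fun x ↦ l (ρ x v)) ∈ expPolyAlgebra E := by
  let W := Fin (Module.finrank ℂ X) → ℂ
  let e : X ≃L[ℂ] W := .ofFinrankEq (by simp [W])
  let Φ : Module.End ℂ X ≃ₐ[ℂ] (W →L[ℂ] W) :=
    (e.toLinearEquiv.conjAlgEquiv ℂ).trans (Module.End.toContinuousLinearMap W)
  let ψ : AddChar E (W →L[ℂ] W) := Φ.toMonoidHom.compAddChar ρ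
  have hψ : Continuous ψ :=
    continuous_clm_apply.2 fun w ↦ e.continuous.comp (hρ (e.symm w))
  have hl := addChar_mem_coefficientSubalgebra hψ
    (l ∘ₗ LinearMap.applyₗ v ∘ₗ Φ.symm.toLinearMap)
  simpa [ψ] using! hl

theorem coefficient_mem_expPolyAlgebra_of_mem_invtSubmodule (hρ : ∀ v, Continuous fun x ↦ ρ x v)
    {V : Submodule ℂ X} [FiniteDimensional ℂ V] (hV : ∀ x, V ∈ (ρ x).invtSubmodule) {v : X}
    (hv : v ∈ V) (l : Module.Dual ℂ X) :
    (fun x ↦ l (ρ x v)) ∈ expPolyAlgebra E := by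
  let σ : AddChar E (Module.End ℂ V) :=
    { toFun x := (ρ x).restrict (hV x)
      map_zero_eq_one' := by ext; simp
      map_add_eq_mul' x y :=
        LinearMap.ext fun w ↦ Subtype.ext (LinearMap.congr_fun (ρ.map_add_eq_mul x y) w) }
  exact coefficient_mem_expPolyAlgebra_of_finiteDimensional (ρ := σ)
    (fun w ↦ (hρ w).subtype_mk _) (l ∘ₗ V.subtype) ⟨v, hv⟩

theorem coefficient_mem_expPolyAlgebra_of_eventually_aeval_eq_zero [IsTopologicalAddGroup E]
    (hρ : ∀ v, Continuous fun x ↦ ρ x v) {h₀ : E} {v : X}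
    (hv : ∀ᶠ h in 𝓝 h₀, ∃ p : ℂ[X], p ≠ 0 ∧ aeval (ρ h) p v = 0) (l : Module.Dual ℂ X) :
    (fun x ↦ l (ρ x v)) ∈ expPolyAlgebra E := by
  obtain ⟨s, hsU, hs, hdense⟩ := exists_finite_subset_dense_closure hv
  have hcomm : ∀ S ∈ ρ '' s, ∀ T ∈ ρ '' s, S * T = T * S := by
    rintro _ ⟨y, -, rfl⟩ _ ⟨z, -, rfl⟩
    rw [← AddChar.map_add_eq_mul, ← AddChar.map_add_eq_mul, add_comm]
  obtain ⟨V, _, hvV, hV⟩ := exists_finiteDimensional_invariant (hs.image ρ) hcomm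
    (Set.forall_mem_image.2 fun _ hy ↦ hsU hy)
  exact coefficient_mem_expPolyAlgebra_of_mem_invtSubmodule hρ
    (mem_invtSubmodule_of_dense hρ hdense (Set.forall_mem_image.1 hV)) hvV l

end Representation

section Translation

variable (E : Type*) [AddCommMonoid E] [TopologicalSpace E] [ContinuousAdd E]

/-- The regular representation of an additive monoid by translations `g ↦ g (· + y)` of its
continuous complex-valued functions, with the compact-open topology. -/
noncomputable def translation : AddChar E (Module.End ℂ C(E, ℂ)) where
  toFun y := (ContinuousMap.compRightAlgHom ℂ ℂ (ContinuousMap.addRight y)).toLinearMap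
  map_zero_eq_one' := by ext; simp
  map_add_eq_mul' y z := by ext; simp [add_assoc]

variable {E}

theorem translation_apply (y : E) (g : C(E, ℂ)) (x : E) : translation E y g x = g (x + y) := rfl

theorem continuous_translation_apply (g : C(E, ℂ)) : Continuous fun y ↦ translation E y g :=
  ContinuousMap.continuous_of_continuous_uncurry _
    (g.continuous.comp (continuous_snd.add continuous_fst))

theorem aeval_translation_ofFn_apply {m : ℕ} (c : Fin m → ℂ) (h : E) (g : C(E, ℂ)) (x : E) :
    aeval (translation E h) (Polynomial.ofFn m c) g x = ∑ i, c i * g (x + (i : ℕ) • h) := by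
  simp [Polynomial.ofFn_eq_sum_monomial, Polynomial.aeval_monomial, ← AddChar.map_nsmul_eq_pow,
    translation_apply, ContinuousMap.sum_apply]

end Translation

theorem exists_eq_sum_eval_mul_exp {d : ℕ} {f : (Fin d → ℝ) → ℂ}
    (hf : f ∈ expPolyAlgebra (Fin d → ℝ)) :
    ∃ (ι : Type) (_ : Fintype ι) (P : ι → MvPolynomial (Fin d) ℂ) (lam : ι → Fin d → ℂ),
      ∀ x, f x = ∑ k, (P k).eval (fun i ↦ (x i : ℂ)) * Complex.exp (∑ i, lam k i * x i) := by
  have hL (L : (Fin d → ℝ) →ₗ[ℝ] ℂ) : ∃ c : Fin d → ℂ, ∀ x, L x = ∑ i, c i * x i :=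
    ⟨fun i ↦ L fun j ↦ if i = j then 1 else 0,
      fun x ↦ (L.pi_apply_eq_sum_univ x).trans (by simp only [Complex.real_smul, mul_comm])⟩
  induction hf using Algebra.adjoin_induction with
  | mem g hg =>
    obtain ⟨L, rfl⟩ | ⟨L, rfl⟩ := hg
    · obtain ⟨c, hc⟩ := hL L
      exact ⟨Unit, inferInstance, fun _ ↦ ∑ i, .C (c i) * .X i, 0, fun x ↦ by simp [hc]⟩
    · obtain ⟨c, hc⟩ := hL L
      exact ⟨Unit, inferInstance, 1, fun _ ↦ c, fun x ↦ by simp [hc]⟩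
  | algebraMap c => exact ⟨Unit, inferInstance, fun _ ↦ .C c, 0, fun x ↦ by simp⟩
  | add g₁ g₂ _ _ h₁ h₂ =>
    obtain ⟨ι, _, P, lam, h₁⟩ := h₁
    obtain ⟨κ, _, Q, mu, h₂⟩ := h₂
    exact ⟨ι ⊕ κ, inferInstance, Sum.elim P Q, Sum.elim lam mu, fun x ↦ by simp [h₁, h₂]⟩
  | mul g₁ g₂ _ _ h₁ h₂ =>
    obtain ⟨ι, _, P, lam, h₁⟩ := h₁
    obtain ⟨κ, _, Q, mu, h₂⟩ := h₂
    refine ⟨ι × κ, inferInstance, fun k ↦ P k.1 * Q k.2, fun k ↦ lam k.1 + mu k.2, fun x ↦ ?_⟩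
    simp only [Pi.mul_apply, h₁, h₂, Finset.sum_mul_sum, Fintype.sum_prod_type, map_mul,
      Pi.add_apply, add_mul, Finset.sum_add_distrib, Complex.exp_add]
    exact Finset.sum_congr rfl fun _ _ ↦ Finset.sum_congr rfl fun _ _ ↦ by ring

theorem isExpPolyReal_of_mem_expPolyAlgebra {d : ℕ} {f : (Fin d → ℝ) → ℝ}
    (hf : (fun x ↦ (f x : ℂ)) ∈ expPolyAlgebra (Fin d → ℝ)) : IsExpPolyReal f := by
  obtain ⟨ι, _, P, lam, hsum⟩ := exists_eq_sum_eval_mul_exp hf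
  let e := (Fintype.equivFin ι).symm
  exact ⟨Fintype.card ι, P ∘ e, lam ∘ e, fun x ↦ (hsum x).trans (e.sum_comp _).symm⟩

theorem rado_higher_dimensions_general {E : Type*} [AddCommGroup E] [Module ℝ E]
    [TopologicalSpace E] [IsTopologicalAddGroup E] [ContinuousSMul ℝ E] [FiniteDimensional ℝ E]
    {n : ℕ} {a : Fin (n + 1) → E → ℂ} {f : E → ℂ} (hf : Continuous f) {h₀ : E}
    (ha : ∀ᶠ h in 𝓝 h₀, ∃ i, a i h ≠ 0)
    (heq : ∀ᶠ h in 𝓝 h₀, ∀ x, ∑ i, a i h * f (x + (i : ℕ) • h) = 0) :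
    f ∈ expPolyAlgebra E := by
  have hann : ∀ᶠ h in 𝓝 h₀, ∃ p : ℂ[X], p ≠ 0 ∧ aeval (translation E h) p ⟨f, hf⟩ = 0 := by
    filter_upwards [ha, heq] with h ⟨i, hi⟩ hsum
    refine ⟨Polynomial.ofFn (n + 1) fun i ↦ a i h, fun hp ↦ hi ?_, ?_⟩
    · exact congrFun (Polynomial.injective_ofFn _ (hp.trans (map_zero _).symm)) i
    · ext x
      rw [aeval_translation_ofFn_apply]
      exact hsum x
  have hcoeff := coefficient_mem_expPolyAlgebra_of_eventually_aeval_eq_zero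
    continuous_translation_apply hann (ContinuousMap.evalCLM ℂ (0 : E)).toLinearMap
  simpa [translation_apply] using! hcoeff

theorem rado_higher_dimensions
    {d n : ℕ} (U : Set (Fin d → ℝ)) (hUopen : IsOpen U) (hUne : U.Nonempty)
    (a : Fin (n + 1) → (Fin d → ℝ) → ℝ)
    (ha : ∀ i, ContinuousOn (a i) U)
    (hnz : ∃ h ∈ U, ∃ i, a i h ≠ 0)
    (f : (Fin d → ℝ) → ℝ) (hf : Continuous f)
    (heq : ∀ x : Fin d → ℝ, ∀ h ∈ U, ∑ i : Fin (n + 1), a i h * f (x + (i : ℕ) • h) = 0) :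
    IsExpPolyReal f := by
  obtain ⟨h₀, hh₀, i, hi⟩ := hnz
  have hU : U ∈ 𝓝 h₀ := hUopen.mem_nhds hh₀
  refine isExpPolyReal_of_mem_expPolyAlgebra <| rado_higher_dimensions_general
    (a := fun i h ↦ (a i h : ℂ)) (Complex.continuous_ofReal.comp hf) (h₀ := h₀) ?_ ?_
  · filter_upwards [((ha i).continuousAt hU).eventually_ne hi] with h hne
    exact ⟨i, Complex.ofReal_ne_zero.2 hne⟩
  · filter_upwards [hU] with h hh x
    exact_mod_cast heq x h hh
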